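/- Let 0 < α < 1 and 0 < σ ≤ 1, and let f_{α,σ} be defined as follows: with f_𝔾(u) = (α·sin(πα)/((1−α)π))·u^{α−1}(1−u)^{α−1}/(u^{2α} − 2u^α(1−u)^α cos(πα) + (1−u)^{2α}) on (0,1) and F_𝔾(y) = ∫₀^y f_𝔾(u) du, set f_{α,σ}(x) = (x^{−σα/(1−α)−1}/π)·sin(πσ)·(1 − (1−x)^α)^{σ/(1−α)} for 0 < x ≤ 1, and f_{α,σ}(x) = (x^{−σα/(1−α)−1}/π)·sin(πσ·F_𝔾(1/x))·((x−1)^{2α} − 2(x−1)^α cos(πα) + 1)^{σ/(2(1−α))} for x > 1. Then the function g_{α,σ}(x) = ∫₀^∞ e^{−x/w}·w^{−1}·f_{α,σ}(w) dw is a probability density on (0,∞), and for every λ ≥ 0, ∫₀^∞ e^{−λx}·g_{α,σ}(x) dx = ((1+λ)^α − λ^α)^{σ/(1−α)}. (Theorem 5.1: g_{α,σ} is the density of the increment Σ_α(C) of the Bertoin–Fujita–Roynette–Yor subordinator over a set C with σ = (1−α)|C|, i.e., Σ_α(C) has the law of G₁·M₁(F_{Y_σ/𝔾_α}).) -/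

import Mathlib

/-!
Write `f z = ((1 + z) ^ α - z ^ α) ^ θ` with `θ = σ / (1 - α)`. This function is analytic on the
upper half-plane, vanishes at infinity, and is real on `[0, ∞)`, so for real `x > 0` Cauchy's
theorem on large squares, applied to the difference quotient of `f` at `x`, recovers `f x` from
`Im f` on the negative half-line: `π f(x) = ∫₀^∞ -Im f(-y) / (y + x) dy`. The argument of
`(1 + z) ^ α - z ^ α` at `z = -y` has derivative `-(1 - α) π f_𝔾(y)` on `(0, 1)` and is constant
for `y ≥ 1`. Hence it stays in `[-(1 - α) π, 0]`, which makes `-Im f(-y)` nonnegative when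
`σ ≤ 1`, and the substitution `y = 1 / w` turns the integral into
`∫₀^∞ f_{α,σ}(w) / (1 + x w) dw = f(x)`. Finally `1 / (1 + x w)` is the Laplace transform at `x`
of an exponential variable with mean `w`.
-/

open MeasureTheory

/-- The density of the BFRY random variable `𝔾_α` on (0,1). -/
noncomputable def bfryDensity (α : ℝ) : ℝ → ℝ := fun u =>
  α * Real.sin (Real.pi * α) / ((1 - α) * Real.pi) *
    (u ^ (α - 1) * (1 - u) ^ (α - 1) /
      (u ^ (2 * α) - 2 * u ^ α * (1 - u) ^ α * Real.cos (Real.pi * α) + (1 - u) ^ (2 * α)))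

/-- The cumulative distribution function `F_𝔾(y) = ∫₀^y f_𝔾(u) du`. -/
noncomputable def bfryCDF (α : ℝ) : ℝ → ℝ := fun y => ∫ u in (0:ℝ)..y, bfryDensity α u

/-- The density `f_{α,σ}` of the Dirichlet mean `M₁(F_{Y_σ/𝔾_α})` (Proposition 5.2). -/
noncomputable def bfryMeanDensity (α σ : ℝ) : ℝ → ℝ := fun x =>
  if x ≤ 1 then
    x ^ (-(σ * α / (1 - α)) - 1) / Real.pi * Real.sin (Real.pi * σ) *
      (1 - (1 - x) ^ α) ^ (σ / (1 - α))
  else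
    x ^ (-(σ * α / (1 - α)) - 1) / Real.pi * Real.sin (Real.pi * σ * bfryCDF α (1 / x)) *
      ((x - 1) ^ (2 * α) - 2 * (x - 1) ^ α * Real.cos (Real.pi * α) + 1) ^ (σ / (2 * (1 - α)))

/-- The density `g_{α,σ}(x) = ∫₀^∞ e^{−x/w} w^{−1} f_{α,σ}(w) dw` of the increment
`Σ_α(C)` of the BFRY subordinator, with `σ = (1−α)|C|` (Theorem 5.1). -/
noncomputable def bfryIncrementDensity (α σ : ℝ) : ℝ → ℝ := fun x =>
  ∫ w in Set.Ioi (0:ℝ), Real.exp (-x / w) * w⁻¹ * bfryMeanDensity α σ w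

section HalfPlane

open Set Filter Topology Complex Asymptotics Bornology
open scoped Interval

theorem norm_intervalIntegral_le_of_norm_le_upperHalfPlane {E : Type*} [NormedAddCommGroup E]
    [NormedSpace ℂ E] [CompleteSpace E] {q : ℂ → E} (hqc : ContinuousOn q {z | 0 ≤ z.im})
    (hqd : DifferentiableOn ℂ q {z | 0 < z.im}) {R C : ℝ} (hR : 0 < R)
    (hC : ∀ z : ℂ, 0 < z.im → R ≤ ‖z‖ → ‖q z‖ ≤ C) :
    ‖∫ t in (-R)..R, q t‖ ≤ 4 * R * C := by
  have hclosed : [[-R, R]] ×ℂ [[0, R]] ⊆ {z : ℂ | 0 ≤ z.im} := fun z hz => by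
    have := hz.2
    rw [mem_preimage, uIcc_of_le hR.le] at this
    exact this.1
  have hopen : Ioo (min (-R) R) (max (-R) R) ×ℂ Ioo (min 0 R) (max 0 R) ⊆ {z : ℂ | 0 < z.im} :=
    fun z hz => by
      have := hz.2
      rw [mem_preimage, min_eq_left hR.le] at this
      exact this.1
  have hcauchy : (∫ t in (-R)..R, q t) - (∫ t in (-R)..R, q (t + R * I))
      + I • (∫ y in (0 : ℝ)..R, q (R + y * I)) - I • (∫ y in (0 : ℝ)..R, q ((-R : ℝ) + y * I))
      = 0 := by
    simpa using integral_boundary_rect_eq_zero_of_continuousOn_of_differentiableOn q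
      (-R : ℝ) (R + R * I) (hqc.mono (by simpa using hclosed)) (hqd.mono (by simpa using hopen))
  have htop : ‖∫ t in (-R)..R, q (t + R * I)‖ ≤ C * |R - -R| := by
    refine intervalIntegral.norm_integral_le_of_norm_le_const fun t _ => hC _ (by simpa) ?_
    simpa [abs_of_pos hR] using abs_im_le_norm (t + R * I)
  have hside : ∀ a : ℝ, |a| = R → ‖∫ y in (0 : ℝ)..R, q (a + y * I)‖ ≤ C * |R - 0| := by
    refine fun a ha => intervalIntegral.norm_integral_le_of_norm_le_const fun y hy => ?_
    rw [uIoc_of_le hR.le] at hy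
    refine hC _ (by simpa using hy.1) ?_
    simpa [ha] using abs_re_le_norm (a + y * I)
  have hright := hside R (abs_of_pos hR)
  have hleft := hside (-R) (by rw [abs_neg, abs_of_pos hR])
  rw [sub_neg_eq_add, abs_of_pos (by linarith)] at htop
  rw [sub_zero, abs_of_pos hR] at hright hleft
  calc ‖∫ t in (-R)..R, q t‖
      = ‖(∫ t in (-R)..R, q (t + R * I)) - I • (∫ y in (0 : ℝ)..R, q (R + y * I))
          + I • (∫ y in (0 : ℝ)..R, q ((-R : ℝ) + y * I))‖ := by
        congr 1
        rw [← sub_eq_zero, ← hcauchy]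
        abel
    _ ≤ C * (R + R) + C * R + C * R := by
        refine (norm_add_le_of_le (norm_sub_le_of_le htop ?_) ?_)
        · rwa [norm_smul, norm_I, one_mul]
        · rwa [norm_smul, norm_I, one_mul]
    _ = 4 * R * C := by ring

theorem tendsto_intervalIntegral_zero_of_isLittleO_inv {E : Type*} [NormedAddCommGroup E]
    [NormedSpace ℂ E] [CompleteSpace E] {q : ℂ → E} (hqc : ContinuousOn q {z | 0 ≤ z.im})
    (hqd : DifferentiableOn ℂ q {z | 0 < z.im})
    (hq : q =o[cobounded ℂ ⊓ 𝓟 {z | 0 < z.im}] fun z => z⁻¹) :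
    Tendsto (fun R : ℝ => ∫ t in (-R)..R, q t) atTop (𝓝 0) := by
  refine Metric.tendsto_nhds.2 fun ε hε => ?_
  obtain ⟨r, -, hr⟩ := (hasBasis_cobounded_norm.eventually_iff).1
    (eventually_inf_principal.1 (hq.def (by positivity : 0 < ε / 5)))
  filter_upwards [eventually_ge_atTop r, eventually_gt_atTop 0] with R hrR hR
  have hbound := norm_intervalIntegral_le_of_norm_le_upperHalfPlane hqc hqd (C := ε / 5 * R⁻¹) hR
    fun z hz hRz => (hr (hrR.trans hRz) hz).trans (by rw [norm_inv]; gcongr)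
  rw [dist_zero_right]
  calc ‖∫ t in (-R)..R, q t‖ ≤ 4 * R * (ε / 5 * R⁻¹) := hbound
    _ = 4 * (ε / 5) := by field_simp
    _ < ε := by linarith

theorem continuousOn_dslope_of_differentiableAt {𝕜 E : Type*} [NontriviallyNormedField 𝕜]
    [NormedAddCommGroup E] [NormedSpace 𝕜 E] {g : 𝕜 → E} {s : Set 𝕜} {a : 𝕜}
    (hgc : ContinuousOn g s) (hga : DifferentiableAt 𝕜 g a) : ContinuousOn (dslope g a) s := by
  intro z hz
  rcases eq_or_ne z a with rfl | hza
  · exact (continuousAt_dslope_same.2 hga).continuousWithinAt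
  · exact (continuousWithinAt_dslope_of_ne hza).2 (hgc z hz)

theorem tendsto_intervalIntegral_dslope_zero {E : Type*} [NormedAddCommGroup E]
    [NormedSpace ℂ E] [CompleteSpace E] {g : ℂ → E} (hgc : ContinuousOn g {z | 0 ≤ z.im})
    (hgd : DifferentiableOn ℂ g {z | 0 < z.im})
    (hg0 : Tendsto g (cobounded ℂ ⊓ 𝓟 {z | 0 < z.im}) (𝓝 0)) {x : ℝ}
    (hgdx : DifferentiableAt ℂ g x) (hgx : g x = 0) :
    Tendsto (fun R : ℝ => ∫ t in (-R)..R, dslope g x t) atTop (𝓝 0) := by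
  have hne : ∀ z ∈ {z : ℂ | 0 < z.im}, z ≠ x := by
    rintro _ hz rfl
    simp at hz
  refine tendsto_intervalIntegral_zero_of_isLittleO_inv
    (continuousOn_dslope_of_differentiableAt hgc hgdx)
    (fun z hz => (differentiableWithinAt_dslope_of_ne (hne z hz)).2 (hgd z hz)) ?_
  have hsub : (fun z : ℂ => z) =O[cobounded ℂ] fun z => z - x :=
    (isLittleO_const_id_cobounded (x : ℂ)).right_isBigO_sub
  have hinv : (fun z : ℂ => (z - x)⁻¹) =O[cobounded ℂ ⊓ 𝓟 {z | 0 < z.im}] fun z => z⁻¹ :=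
    (hsub.inv_rev ((eventually_ne_cobounded 0).mono fun z hz h => absurd h hz)).mono inf_le_left
  have hprod := hinv.smul_isLittleO ((isLittleO_one_iff ℂ).2 hg0)
  simp only [smul_eq_mul, mul_one] at hprod
  refine hprod.congr' ?_ .rfl
  filter_upwards [mem_inf_of_right (mem_principal_self _)] with z hz
  rw [dslope_of_ne _ (hne z hz), slope_def_module, hgx, sub_zero]

theorem continuous_dslope_comp_ofReal {E : Type*} [NormedAddCommGroup E] [NormedSpace ℂ E]
    {g : ℂ → E} (hgc : ContinuousOn g {z | 0 ≤ z.im}) {x : ℝ} (hgdx : DifferentiableAt ℂ g x) :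
    Continuous fun t : ℝ => dslope g x t :=
  (continuousOn_dslope_of_differentiableAt hgc hgdx).comp_continuous continuous_ofReal
    fun t => (ofReal_im t).ge

theorem tendsto_intervalIntegral_im_dslope_zero {g : ℂ → ℂ} (hgc : ContinuousOn g {z | 0 ≤ z.im})
    (hgd : DifferentiableOn ℂ g {z | 0 < z.im})
    (hg0 : Tendsto g (cobounded ℂ ⊓ 𝓟 {z | 0 < z.im}) (𝓝 0)) {x : ℝ}
    (hgdx : DifferentiableAt ℂ g x) (hgx : g x = 0) :
    Tendsto (fun R : ℝ => ∫ t in (-R)..R, (dslope g x t).im) atTop (𝓝 0) := by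
  have hlim := (imCLM.continuous.tendsto _).comp
    (tendsto_intervalIntegral_dslope_zero hgc hgd hg0 hgdx hgx)
  rw [map_zero] at hlim
  exact hlim.congr fun R => (imCLM.intervalIntegral_comp_comm
    ((continuous_dslope_comp_ofReal hgc hgdx).intervalIntegrable _ _)).symm

theorem im_dslope_ofReal {g : ℂ → ℂ} {x t : ℝ} (hgx : g x = 0) (ht : t ≠ x) :
    (dslope g x t).im = (g t).im / (t - x) := by
  rw [dslope_of_ne _ (ofReal_injective.ne ht), slope_def_field, hgx, sub_zero, ← ofReal_sub,
    div_ofReal_im]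

theorem im_I_div_ofReal_add_I (s : ℝ) : (I / (s + I)).im = s * (1 + s ^ 2)⁻¹ := by
  simp [normSq_apply, ← sq, add_comm, div_eq_mul_inv]

theorem differentiableAt_I_div_sub_add_I (x : ℝ) {z : ℂ} (hz : 0 ≤ z.im) :
    DifferentiableAt ℂ (fun z : ℂ => I / (z - x + I)) z := by
  have hden : z - x + I ≠ 0 := fun h => by
    have him : z.im + 1 = 0 := by simpa using congrArg im h
    linarith
  fun_prop (disch := exact hden)

theorem tendsto_I_div_sub_add_I_cobounded (x : ℝ) :
    Tendsto (fun z : ℂ => I / (z - x + I)) (cobounded ℂ) (𝓝 0) := by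
  simpa [div_eq_mul_inv] using (tendsto_inv₀_cobounded.comp
    ((tendsto_add_const_cobounded I).comp (tendsto_sub_const_cobounded (x : ℂ)))).const_mul I

theorem integrable_inv_one_add_sub_sq (x : ℝ) : Integrable fun t : ℝ => (1 + (t - x) ^ 2)⁻¹ :=
  integrable_inv_one_add_sq.comp_sub_right x

theorem tendsto_intervalIntegral_inv_one_add_sub_sq (x : ℝ) :
    Tendsto (fun R : ℝ => ∫ t in (-R)..R, (1 + (t - x) ^ 2)⁻¹) atTop (𝓝 Real.pi) := by
  have := intervalIntegral_tendsto_integral (integrable_inv_one_add_sub_sq x)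
    tendsto_neg_atTop_atBot tendsto_id
  rwa [integral_sub_right_eq_self fun t : ℝ => (1 + t ^ 2)⁻¹, integral_univ_inv_one_add_sq] at this

theorem tendsto_intervalIntegral_im_div_sub {f : ℂ → ℂ} (hfc : ContinuousOn f {z | 0 ≤ z.im})
    (hfd : DifferentiableOn ℂ f {z | 0 < z.im})
    (hf0 : Tendsto f (cobounded ℂ ⊓ 𝓟 {z | 0 < z.im}) (𝓝 0)) {x : ℝ}
    (hfx : DifferentiableAt ℂ f x) (him : (f x).im = 0) :
    Tendsto (fun R : ℝ => ∫ t in (-R)..R, (f t).im / (t - x)) atTop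
      (𝓝 (Real.pi * (f x).re)) := by
  -- `I / (z - x + I)` is `1` at `x`, is analytic on the upper half-plane, and vanishes at infinity;
  -- on the real line, its imaginary part divided by `t - x` is the Cauchy kernel.
  set g : ℂ → ℂ := fun z => f z - f x * (I / (z - x + I)) with hg
  have hkd {z : ℂ} (hz : 0 ≤ z.im) := (differentiableAt_I_div_sub_add_I x hz).const_mul (f x)
  have hgc : ContinuousOn g {z | 0 ≤ z.im} :=
    hfc.sub fun z hz => (hkd hz).continuousAt.continuousWithinAt
  have hgd : DifferentiableOn ℂ g {z | 0 < z.im} :=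
    hfd.sub fun z hz => (hkd (le_of_lt hz)).differentiableWithinAt
  have hgdx : DifferentiableAt ℂ g x := hfx.sub (hkd (ofReal_im x).ge)
  have hgx : g x = 0 := by simp [hg]
  have hg0 : Tendsto g (cobounded ℂ ⊓ 𝓟 {z | 0 < z.im}) (𝓝 0) := by
    simpa using hf0.sub (((tendsto_I_div_sub_add_I_cobounded x).mono_left inf_le_left).const_mul _)
  have hsplit (t : ℝ) (ht : t ≠ x) :
      (f t).im / (t - x) = (dslope g x t).im + (f x).re * (1 + (t - x) ^ 2)⁻¹ := by
    have htx : t - x ≠ 0 := sub_ne_zero.2 ht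
    have hfx_re : f x = (f x).re := Complex.ext rfl him
    rw [im_dslope_ofReal hgx ht, hg, sub_im, ← ofReal_sub, hfx_re, im_ofReal_mul,
      im_I_div_ofReal_add_I, ofReal_re]
    field_simp
    ring
  have hdslope : Continuous fun t : ℝ => (dslope g x t).im :=
    continuous_im.comp (continuous_dslope_comp_ofReal hgc hgdx)
  have hlim := (tendsto_intervalIntegral_im_dslope_zero hgc hgd hg0 hgdx hgx).add
    ((tendsto_intervalIntegral_inv_one_add_sub_sq x).const_mul (f x).re)
  rw [zero_add, mul_comm] at hlim
  refine hlim.congr fun R => ?_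
  rw [← intervalIntegral.integral_const_mul, ← intervalIntegral.integral_add
    (hdslope.intervalIntegrable _ _)
    ((integrable_inv_one_add_sub_sq x).const_mul _).intervalIntegrable]
  refine intervalIntegral.integral_congr_ae ?_
  filter_upwards [compl_mem_ae_iff.2 (measure_singleton x)] with t ht _
  exact (hsplit t ht).symm

theorem intervalIntegral_neg_eq_of_eq_zero {u : ℝ → ℝ} (hu : ∀ t, 0 ≤ t → u t = 0) {R : ℝ}
    (hR : 0 ≤ R) (hui : IntervalIntegrable u volume (-R) 0) :
    ∫ t in (-R)..R, u t = ∫ y in (0 : ℝ)..R, u (-y) := by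
  have hzero : EqOn u 0 [[0, R]] := fun t ht => hu t (uIcc_of_le hR ▸ ht).1
  have hui' : IntervalIntegrable u volume 0 R :=
    (intervalIntegrable_const (c := (0 : ℝ))).congr fun t ht => (hzero (uIoc_subset_uIcc ht)).symm
  rw [← intervalIntegral.integral_add_adjacent_intervals hui hui',
    intervalIntegral.integral_congr hzero, intervalIntegral.integral_comp_neg, neg_zero]
  simp

theorem integrableOn_and_integral_neg_im_div_add {f : ℂ → ℂ} (hfc : ContinuousOn f {z | 0 ≤ z.im})
    (hfd : DifferentiableOn ℂ f {z | 0 < z.im})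
    (hf0 : Tendsto f (cobounded ℂ ⊓ 𝓟 {z | 0 < z.im}) (𝓝 0))
    (hreal : ∀ t : ℝ, 0 ≤ t → (f t).im = 0) (hneg : ∀ y : ℝ, 0 ≤ y → (f (-y)).im ≤ 0) {x : ℝ}
    (hx : 0 < x) (hfx : DifferentiableAt ℂ f x) :
    IntegrableOn (fun y : ℝ => -(f (-y)).im / (y + x)) (Ioi 0) ∧
      ∫ y in Ioi (0 : ℝ), -(f (-y)).im / (y + x) = Real.pi * (f x).re := by
  have hcont : Continuous fun t : ℝ => (f t).im :=
    continuous_im.comp (hfc.comp_continuous continuous_ofReal fun t => (ofReal_im t).ge)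
  have hcont' : ContinuousOn (fun y : ℝ => -(f (-y)).im / (y + x)) (Ici 0) := by
    refine ContinuousOn.div ?_ (by fun_prop) fun y hy => (add_pos_of_nonneg_of_pos hy hx).ne'
    exact_mod_cast (hcont.comp continuous_neg).neg.continuousOn
  have hnonneg : ∀ y : ℝ, 0 ≤ y → 0 ≤ -(f (-y)).im / (y + x) := fun y hy =>
    div_nonneg (neg_nonneg.2 (hneg y hy)) (by linarith)
  have hlim : Tendsto (fun R : ℝ => ∫ y in (0 : ℝ)..R, -(f (-y)).im / (y + x)) atTop
      (𝓝 (Real.pi * (f x).re)) := by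
    refine (tendsto_intervalIntegral_im_div_sub hfc hfd hf0 hfx (hreal x hx.le)).congr' ?_
    filter_upwards [eventually_ge_atTop 0] with R hR
    rw [intervalIntegral_neg_eq_of_eq_zero (fun t ht => by rw [hreal t ht, zero_div]) hR]
    · refine intervalIntegral.integral_congr fun y _ => ?_
      rw [ofReal_neg, neg_div, ← div_neg, neg_add']
    · refine ContinuousOn.intervalIntegrable (hcont.continuousOn.div (by fun_prop) fun t ht => ?_)
      rw [uIcc_of_le (by linarith)] at ht
      exact (sub_neg_of_lt (ht.2.trans_lt hx)).ne
  have hint : IntegrableOn (fun y : ℝ => -(f (-y)).im / (y + x)) (Ioi 0) := by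
    refine integrableOn_Ioi_of_intervalIntegral_norm_tendsto (Real.pi * (f x).re) 0
      (fun R => ?_) tendsto_id (hlim.congr' ?_)
    · exact (hcont'.mono Icc_subset_Ici_self).integrableOn_Icc.mono_set Ioc_subset_Icc_self
    · filter_upwards [eventually_ge_atTop 0] with R hR
      refine intervalIntegral.integral_congr fun y hy => ?_
      rw [uIcc_of_le hR] at hy
      exact (Real.norm_of_nonneg (hnonneg y hy.1)).symm
  exact ⟨hint, tendsto_nhds_unique (intervalIntegral_tendsto_integral_Ioi 0 hint tendsto_id) hlim⟩

end HalfPlane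

section Stieltjes

open Set Filter Topology Complex Bornology

theorem integrableOn_and_integral_div_of_tendsto {h : ℝ → ℝ} {c : ℝ} (hh : ∀ y > 0, 0 ≤ h y)
    (hint : ∀ x > 0, IntegrableOn (fun y => h y / (y + x)) (Ioi 0))
    (hlim : Tendsto (fun x => ∫ y in Ioi (0 : ℝ), h y / (y + x)) (𝓝[>] 0) (𝓝 c)) :
    IntegrableOn (fun y => h y / y) (Ioi 0) ∧ ∫ y in Ioi (0 : ℝ), h y / y = c := by
  have hpt : ∀ y > 0, Tendsto (fun x => h y / (y + x)) (𝓝[>] 0) (𝓝 (h y / y)) := fun y hy => by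
    have : ContinuousAt (fun x => h y / (y + x)) 0 :=
      continuousAt_const.div (by fun_prop) (by simpa using hy.ne')
    simpa using this.tendsto.mono_left nhdsWithin_le_nhds
  have hle : ∀ y > 0, ∀ x > 0, ‖h y / (y + x)‖ ≤ h y / y := fun y hy x hx => by
    have := hh y hy
    rw [Real.norm_of_nonneg (by positivity)]
    gcongr
    linarith
  have hseq : Tendsto (fun n : ℕ => 1 / ((n : ℝ) + 1)) atTop (𝓝[>] 0) :=
    tendsto_nhdsWithin_iff.2 ⟨tendsto_one_div_add_atTop_nhds_zero_nat,
      .of_forall fun n => mem_Ioi.2 Nat.one_div_pos_of_nat⟩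
  have hdiv : IntegrableOn (fun y => h y / y) (Ioi 0) := by
    refine integrable_of_tendsto (G := fun n y => h y / (y + 1 / ((n : ℝ) + 1)))
      ?_ (fun n => (hint _ Nat.one_div_pos_of_nat).aestronglyMeasurable) ?_
    · filter_upwards [ae_restrict_mem measurableSet_Ioi] with y hy using (hpt y hy).comp hseq
    · have henorm : ∀ n : ℕ, ENNReal.ofReal (∫ y in Ioi (0 : ℝ), h y / (y + 1 / ((n : ℝ) + 1))) =
          ∫⁻ y in Ioi (0 : ℝ), ‖h y / (y + 1 / ((n : ℝ) + 1))‖ₑ := fun n => by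
        rw [← ofReal_integral_norm_eq_lintegral_enorm (hint _ Nat.one_div_pos_of_nat)]
        refine congrArg _ (setIntegral_congr_fun measurableSet_Ioi fun y hy => ?_)
        have := hh y hy
        exact (Real.norm_of_nonneg (div_nonneg this (by have := mem_Ioi.1 hy; positivity))).symm
      rw [((ENNReal.tendsto_ofReal (hlim.comp hseq)).congr henorm).liminf_eq]
      exact ENNReal.ofReal_ne_top
  refine ⟨hdiv, tendsto_nhds_unique ?_ hlim⟩
  refine tendsto_integral_filter_of_dominated_convergence (fun y => h y / y)
    (eventually_mem_nhdsWithin.mono fun x hx => (hint x hx).aestronglyMeasurable)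
    (eventually_mem_nhdsWithin.mono fun x hx => ?_) hdiv ?_
  · filter_upwards [ae_restrict_mem measurableSet_Ioi] with y hy using hle y hy x hx
  · filter_upwards [ae_restrict_mem measurableSet_Ioi] with y hy using hpt y hy

theorem integrableOn_and_integral_neg_im_div_add_of_nonneg {f : ℂ → ℂ}
    (hfc : ContinuousOn f {z | 0 ≤ z.im}) (hfd : DifferentiableOn ℂ f {z | 0 < z.im})
    (hf0 : Tendsto f (cobounded ℂ ⊓ 𝓟 {z | 0 < z.im}) (𝓝 0))
    (hfx : ∀ x : ℝ, 0 < x → DifferentiableAt ℂ f x)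
    (hreal : ∀ t : ℝ, 0 ≤ t → (f t).im = 0) (hneg : ∀ y : ℝ, 0 ≤ y → (f (-y)).im ≤ 0) {x : ℝ}
    (hx : 0 ≤ x) :
    IntegrableOn (fun y : ℝ => -(f (-y)).im / (y + x)) (Ioi 0) ∧
      ∫ y in Ioi (0 : ℝ), -(f (-y)).im / (y + x) = Real.pi * (f x).re := by
  have hpos {x : ℝ} (hx : 0 < x) :=
    integrableOn_and_integral_neg_im_div_add hfc hfd hf0 hreal hneg hx (hfx x hx)
  rcases hx.eq_or_lt with rfl | hx
  · simp only [add_zero]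
    refine integrableOn_and_integral_div_of_tendsto
      (fun y hy => neg_nonneg.2 (hneg y (le_of_lt hy))) (fun x hx => (hpos hx).1) ?_
    have hcont : Continuous fun t : ℝ => Real.pi * (f t).re := continuous_const.mul
      (continuous_re.comp (hfc.comp_continuous continuous_ofReal fun t => (ofReal_im t).ge))
    exact ((hcont.tendsto 0).mono_left nhdsWithin_le_nhds).congr'
      (eventually_mem_nhdsWithin.mono fun x hx => (hpos hx).2.symm)
  · exact hpos hx

theorem integrableOn_and_integral_comp_inv_div {h : ℝ → ℝ} {x : ℝ} :
    (IntegrableOn (fun w => h w⁻¹ / w / (1 + x * w)) (Ioi 0) ↔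
      IntegrableOn (fun y => h y / (y + x)) (Ioi 0)) ∧
    ∫ w in Ioi (0 : ℝ), h w⁻¹ / w / (1 + x * w) = ∫ y in Ioi (0 : ℝ), h y / (y + x) := by
  have hsubst : ∀ w ∈ Ioi (0 : ℝ), (|(-1 : ℝ)| * w ^ ((-1 : ℝ) - 1)) •
      (h (w ^ (-1 : ℝ)) / (w ^ (-1 : ℝ) + x)) = h w⁻¹ / w / (1 + x * w) := fun w hw => by
    have hw' : w ≠ 0 := ne_of_gt hw
    rw [Real.rpow_sub_one hw', Real.rpow_neg_one, abs_neg, abs_one, one_mul, smul_eq_mul]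
    field_simp
  constructor
  · rw [← integrableOn_Ioi_comp_rpow_iff (fun y => h y / (y + x)) (by norm_num : (-1 : ℝ) ≠ 0)]
    exact integrableOn_congr_fun (fun w hw => (hsubst w hw).symm) measurableSet_Ioi
  · rw [← integral_comp_rpow_Ioi (fun y => h y / (y + x)) (by norm_num : (-1 : ℝ) ≠ 0)]
    exact setIntegral_congr_fun measurableSet_Ioi fun w hw => (hsubst w hw).symm

end Stieltjes

section ExponentialMixture

open Set

theorem integrableOn_and_integral_exp_mul_exp_div {s w : ℝ} (hs : 0 ≤ s) (hw : 0 < w) (r : ℝ) :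
    IntegrableOn (fun x => Real.exp (-s * x) * (Real.exp (-x / w) * w⁻¹ * r)) (Ioi 0) ∧
      ∫ x in Ioi (0 : ℝ), Real.exp (-s * x) * (Real.exp (-x / w) * w⁻¹ * r) = r / (1 + s * w) := by
  have hrate : 0 < s + w⁻¹ := by positivity
  have hkernel : (fun x => Real.exp (-s * x) * (Real.exp (-x / w) * w⁻¹ * r)) =
      fun x => Real.exp (-(s + w⁻¹) * x) * (w⁻¹ * r) := by
    ext x
    rw [show -(s + w⁻¹) * x = -s * x + -x / w by ring, Real.exp_add]
    ring
  rw [hkernel]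
  refine ⟨(integrableOn_exp_mul_Ioi (by linarith) 0).mul_const _, ?_⟩
  rw [integral_mul_const, integral_exp_mul_Ioi (by linarith), mul_zero, Real.exp_zero]
  field_simp
  ring

theorem integral_exp_mul_integral_exp_div {ρ : ℝ → ℝ} {s : ℝ} (hs : 0 ≤ s)
    (hρ : IntegrableOn (fun w => ρ w / (1 + s * w)) (Ioi 0)) :
    ∫ x in Ioi (0 : ℝ), Real.exp (-s * x) * ∫ w in Ioi (0 : ℝ), Real.exp (-x / w) * w⁻¹ * ρ w =
      ∫ w in Ioi (0 : ℝ), ρ w / (1 + s * w) := by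
  set μ := volume.restrict (Ioi (0 : ℝ))
  have hμ : ∀ᵐ w ∂μ, 0 < w := ae_restrict_mem measurableSet_Ioi
  set K : ℝ → ℝ → ℝ := fun x w => Real.exp (-s * x) * (Real.exp (-x / w) * w⁻¹ * ρ w) with hK
  have hρm : AEStronglyMeasurable ρ μ := by
    refine (hρ.aestronglyMeasurable.mul
      (by fun_prop : Continuous fun w : ℝ => 1 + s * w).aestronglyMeasurable).congr ?_
    filter_upwards [hμ] with w hw
    exact div_mul_cancel₀ _ (by positivity)
  have hKm : AEStronglyMeasurable (Function.uncurry K) (μ.prod μ) :=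
    (by fun_prop : Measurable fun p : ℝ × ℝ => Real.exp (-s * p.1)).aestronglyMeasurable.mul
      ((by fun_prop : Measurable fun p : ℝ × ℝ =>
        Real.exp (-p.1 / p.2) * p.2⁻¹).aestronglyMeasurable.mul hρm.comp_snd)
  have hKi : Integrable (Function.uncurry K) (μ.prod μ) := by
    refine (integrable_prod_iff' hKm).2 ⟨?_, hρ.norm.congr ?_⟩
    · filter_upwards [hμ] with w hw
      exact (integrableOn_and_integral_exp_mul_exp_div hs hw (ρ w)).1
    · filter_upwards [hμ] with w hw
      rw [norm_div, Real.norm_of_nonneg (by positivity : 0 ≤ 1 + s * w),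
        ← (integrableOn_and_integral_exp_mul_exp_div hs hw ‖ρ w‖).2]
      refine integral_congr_ae (.of_forall fun x => ?_)
      simp only [Function.uncurry_apply_pair, hK, norm_mul, norm_inv, Real.norm_of_nonneg hw.le,
        Real.norm_of_nonneg (Real.exp_nonneg _)]
  calc ∫ x, Real.exp (-s * x) * ∫ w, Real.exp (-x / w) * w⁻¹ * ρ w ∂μ ∂μ
      = ∫ x, ∫ w, K x w ∂μ ∂μ := by simp only [hK, integral_const_mul]
    _ = ∫ w, ∫ x, K x w ∂μ ∂μ := integral_integral_swap hKi
    _ = ∫ w, ρ w / (1 + s * w) ∂μ := by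
        refine integral_congr_ae ?_
        filter_upwards [hμ] with w hw
        exact (integrableOn_and_integral_exp_mul_exp_div hs hw (ρ w)).2

end ExponentialMixture

section BFRY

open Set Filter Topology Complex Bornology

theorem continuousOn_cpow_const_upperHalfPlane {c : ℂ} (hc : 0 < c.re) :
    ContinuousOn (fun z : ℂ => z ^ c) {z | 0 ≤ z.im} := by
  intro z _
  by_cases h : 0 ≤ z.re ∨ z.im ≠ 0
  · exact (continuousAt_cpow_const_of_re_pos h hc).continuousWithinAt
  · push Not at h
    have hz0 : z ≠ 0 := fun h0 => h.1.ne (by rw [h0, zero_re])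
    have hexp : ContinuousWithinAt (fun w : ℂ => exp (log w * c)) {z | 0 ≤ z.im} z :=
      ((continuousWithinAt_log_of_re_neg_of_im_zero h.1 h.2).mul continuousWithinAt_const).cexp
    refine hexp.congr_of_eventuallyEq ?_ (cpow_def_of_ne_zero hz0 c)
    filter_upwards [nhdsWithin_le_nhds (isOpen_ne.mem_nhds hz0)] with w hw
    exact cpow_def_of_ne_zero hw c

theorem hasDerivAt_add_ofReal_cpow_const {z c : ℂ} {s : ℝ} (hs : z + s ∈ slitPlane) :
    HasDerivAt (fun s : ℝ => (z + s) ^ c) (c * (z + s) ^ (c - 1)) s := by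
  simpa using (((hasDerivAt_id (s : ℂ)).const_add z).cpow_const hs).comp_ofReal

theorem im_cpow_ofReal_neg {z : ℂ} {r : ℝ} (hz : 0 < z.im) (hr : -1 < r) (hr0 : r < 0) :
    (z ^ (r : ℂ)).im < 0 := by
  have hz0 : z ≠ 0 := fun h => hz.ne' (by rw [h, zero_im])
  have harg : 0 < z.arg :=
    (arg_nonneg_iff.2 hz.le).lt_of_ne fun h => hz.ne' (arg_eq_zero_iff.1 h.symm).2
  rw [cpow_ofReal_im]
  exact mul_neg_of_pos_of_neg (Real.rpow_pos_of_pos (norm_pos_iff.2 hz0) _)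
    (Real.sin_neg_of_neg_of_neg_pi_lt (mul_neg_of_pos_of_neg harg hr0)
      (by nlinarith [arg_le_pi z]))

theorem neg_ofReal_cpow (r : ℝ) {y : ℝ} (hy : 0 ≤ y) :
    (-(y : ℂ)) ^ (r : ℂ) = (y ^ r : ℝ) * exp ((Real.pi * r : ℝ) * I) := by
  have h := ofReal_cpow_of_nonpos (neg_nonpos.2 hy) (r : ℂ)
  push_cast at h
  rw [h, neg_neg, ofReal_cpow hy]
  push_cast
  ring_nf

theorem normSq_ofReal_sub_ofReal_mul_exp (a b φ : ℝ) :
    normSq (a - b * exp (φ * I)) = a ^ 2 - 2 * a * b * Real.cos φ + b ^ 2 := by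
  rw [normSq_apply, sub_re, sub_im, ofReal_re, ofReal_im, re_ofReal_mul, im_ofReal_mul,
    exp_ofReal_mul_I_re, exp_ofReal_mul_I_im]
  linear_combination b ^ 2 * Real.sin_sq_add_cos_sq φ

theorem rpow_two_mul {x : ℝ} (hx : 0 ≤ x) (r : ℝ) : x ^ (2 * r) = (x ^ r) ^ 2 := by
  rw [mul_comm, Real.rpow_mul hx, Real.rpow_two]

/-- The function `(1 + z) ^ α - z ^ α`, whose powers are the analytic continuations of the Laplace
transforms of the BFRY subordinator `Σ_α`. On the negative real axis, the principal argument is `π`,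
so that the values there are the boundary values from the upper half-plane. -/
noncomputable def cpowDiff (α : ℝ) (z : ℂ) : ℂ := (1 + z) ^ (α : ℂ) - z ^ (α : ℂ)

/-- The Laplace transform of `Σ_α(θ)`, continued analytically from `[0, ∞)` to the upper half-plane
and continuously to its closure. -/
noncomputable def bfryLaplace (α θ : ℝ) (z : ℂ) : ℂ := cpowDiff α z ^ (θ : ℂ)

variable {α : ℝ}

theorem continuousOn_cpowDiff (hα0 : 0 < α) : ContinuousOn (cpowDiff α) {z | 0 ≤ z.im} := by
  have hcpow := continuousOn_cpow_const_upperHalfPlane (c := α) (by rwa [ofReal_re])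
  exact (hcpow.comp (f := fun z => 1 + z) (by fun_prop) fun z hz => by simpa using hz).sub hcpow

theorem differentiableAt_cpowDiff {z : ℂ} (hz : z ∈ slitPlane) :
    DifferentiableAt ℂ (cpowDiff α) z := by
  have hz1 : 1 + z ∈ slitPlane := by
    rcases hz with h | h
    · exact Or.inl (by rw [add_re, one_re]; linarith)
    · exact Or.inr (by simpa using h)
  exact ((differentiableAt_id.const_add 1).cpow_const hz1).sub (differentiableAt_id.cpow_const hz)

theorem hasDerivAt_add_ofReal_cpow_of_im_pos {z : ℂ} (hz : 0 < z.im) (s : ℝ) :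
    HasDerivAt (fun s : ℝ => (z + s) ^ (α : ℂ)) (α * (z + s) ^ ((α - 1 : ℝ) : ℂ)) s := by
  have hs : z + s ∈ slitPlane := Or.inr (by simpa using hz.ne')
  simpa using hasDerivAt_add_ofReal_cpow_const (c := α) hs

theorem im_cpowDiff_neg_of_im_pos (hα0 : 0 < α) (hα1 : α < 1) {z : ℂ} (hz : 0 < z.im) :
    (cpowDiff α z).im < 0 := by
  have hanti : StrictAnti fun s : ℝ => ((z + s) ^ (α : ℂ)).im := by
    refine strictAnti_of_hasDerivAt_neg (fun s => imCLM.hasFDerivAt.comp_hasDerivAt s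
      (hasDerivAt_add_ofReal_cpow_of_im_pos hz s)) fun s => ?_
    rw [imCLM_apply, im_ofReal_mul]
    exact mul_neg_of_pos_of_neg hα0
      (im_cpow_ofReal_neg (by simpa using hz) (by linarith) (by linarith))
  have h01 := hanti (zero_lt_one' ℝ)
  simp only [ofReal_one, ofReal_zero, add_zero] at h01
  rw [cpowDiff, sub_im, add_comm 1 z]
  linarith

theorem norm_cpowDiff_le (hα0 : 0 ≤ α) (hα1 : α ≤ 1) {z : ℂ} (hz : 0 < z.im) (hz1 : 1 < ‖z‖) :
    ‖cpowDiff α z‖ ≤ α * (‖z‖ - 1) ^ (α - 1) := by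
  have hmvt := norm_image_sub_le_of_norm_deriv_le_segment_01'
    (fun s _ => (hasDerivAt_add_ofReal_cpow_of_im_pos (α := α) hz s).hasDerivWithinAt)
    (C := α * (‖z‖ - 1) ^ (α - 1)) fun s hs => ?_
  · simpa [cpowDiff, add_comm] using hmvt
  · have hzs : ‖z‖ - 1 ≤ ‖z + s‖ := by
      have h := norm_sub_le (z + s) (s : ℂ)
      rw [add_sub_cancel_right, norm_real, Real.norm_of_nonneg hs.1] at h
      linarith [hs.2]
    rw [norm_mul, norm_cpow_real, norm_real, Real.norm_of_nonneg hα0]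
    exact mul_le_mul_of_nonneg_left
      (Real.rpow_le_rpow_of_nonpos (by linarith) hzs (by linarith)) hα0

theorem tendsto_cpowDiff_cobounded (hα0 : 0 ≤ α) (hα1 : α < 1) :
    Tendsto (cpowDiff α) (cobounded ℂ ⊓ 𝓟 {z | 0 < z.im}) (𝓝 0) := by
  have hrpow : Tendsto (fun r : ℝ => α * (r - 1) ^ (-(1 - α))) atTop (𝓝 0) := by
    simpa [sub_eq_add_neg] using ((tendsto_rpow_neg_atTop (sub_pos.2 hα1)).comp
      (tendsto_atTop_add_const_right atTop (-1) tendsto_id)).const_mul α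
  refine squeeze_zero_norm' ?_ ((hrpow.comp tendsto_norm_cobounded_atTop).mono_left inf_le_left)
  filter_upwards [mem_inf_of_right (mem_principal_self _),
    mem_inf_of_left (tendsto_norm_cobounded_atTop.eventually_gt_atTop 1)] with z hz hz1
  simpa using norm_cpowDiff_le hα0 hα1.le hz hz1

theorem cpowDiff_ofReal {x : ℝ} (hx : 0 ≤ x) :
    cpowDiff α x = ((1 + x) ^ α - x ^ α : ℝ) := by
  rw [cpowDiff, ofReal_sub, ofReal_cpow (by linarith), ofReal_cpow hx, ofReal_add, ofReal_one]

theorem rpow_lt_one_add_rpow (hα0 : 0 < α) {x : ℝ} (hx : 0 ≤ x) : x ^ α < (1 + x) ^ α :=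
  Real.rpow_lt_rpow hx (by linarith) hα0

theorem cpowDiff_neg_of_le_one {y : ℝ} (hy0 : 0 ≤ y) (hy1 : y ≤ 1) :
    cpowDiff α (-y) = ((1 - y) ^ α : ℝ) - (y ^ α : ℝ) * exp ((Real.pi * α : ℝ) * I) := by
  rw [cpowDiff, neg_ofReal_cpow α hy0, ofReal_cpow (sub_nonneg.2 hy1), ofReal_sub, ofReal_one,
    sub_eq_add_neg 1]

theorem cpowDiff_neg_of_one_le {y : ℝ} (hy : 1 ≤ y) :
    cpowDiff α (-y) =
      (y ^ α - (y - 1) ^ α : ℝ) * exp ((-((1 - α) * Real.pi) : ℝ) * I) := by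
  have hy1 : 1 + -(y : ℂ) = -((y - 1 : ℝ) : ℂ) := by push_cast; ring
  have hexp : exp ((Real.pi * α : ℝ) * I) = -exp ((-((1 - α) * Real.pi) : ℝ) * I) := by
    rw [← exp_add_pi_mul_I]
    push_cast
    ring_nf
  rw [cpowDiff, hy1, neg_ofReal_cpow α (by linarith), neg_ofReal_cpow α (by linarith), hexp]
  push_cast
  ring

theorem sub_one_rpow_lt_rpow (hα0 : 0 < α) {y : ℝ} (hy : 1 ≤ y) : (y - 1) ^ α < y ^ α :=
  Real.rpow_lt_rpow (by linarith) (by linarith) hα0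

theorem arg_cpowDiff_neg_of_one_le (hα0 : 0 < α) (hα1 : α < 1) {y : ℝ} (hy : 1 ≤ y) :
    (cpowDiff α (-y)).arg = -((1 - α) * Real.pi) := by
  have hpi := Real.pi_pos
  rw [cpowDiff_neg_of_one_le hy, arg_real_mul _ (sub_pos.2 (sub_one_rpow_lt_rpow hα0 hy)),
    arg_exp_mul_I, toIocMod_eq_self]
  constructor <;> nlinarith

theorem norm_cpowDiff_neg_of_one_le (hα0 : 0 < α) {y : ℝ} (hy : 1 ≤ y) :
    ‖cpowDiff α (-y)‖ = y ^ α - (y - 1) ^ α := by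
  rw [cpowDiff_neg_of_one_le hy, norm_mul, norm_exp_ofReal_mul_I, norm_real, mul_one,
    Real.norm_of_nonneg (sub_pos.2 (sub_one_rpow_lt_rpow hα0 hy)).le]

theorem normSq_cpowDiff_neg_of_le_one {y : ℝ} (hy0 : 0 ≤ y) (hy1 : y ≤ 1) :
    normSq (cpowDiff α (-y)) =
      y ^ (2 * α) - 2 * y ^ α * (1 - y) ^ α * Real.cos (Real.pi * α) + (1 - y) ^ (2 * α) := by
  rw [cpowDiff_neg_of_le_one hy0 hy1, normSq_ofReal_sub_ofReal_mul_exp, rpow_two_mul hy0,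
    rpow_two_mul (by linarith)]
  ring

theorem sin_pi_mul_pos (hα0 : 0 < α) (hα1 : α < 1) : 0 < Real.sin (Real.pi * α) :=
  Real.sin_pos_of_pos_of_lt_pi (by positivity) (by nlinarith [Real.pi_pos])

theorem im_cpowDiff_neg_of_neg (hα0 : 0 < α) (hα1 : α < 1) {y : ℝ} (hy : 0 < y) :
    (cpowDiff α (-y)).im < 0 := by
  have hsin := sin_pi_mul_pos hα0 hα1
  rcases le_total y 1 with hy1 | hy1
  · rw [cpowDiff_neg_of_le_one hy.le hy1, sub_im, ofReal_im, im_ofReal_mul, exp_ofReal_mul_I_im,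
      zero_sub, neg_lt_zero]
    positivity
  · rw [← arg_neg_iff, arg_cpowDiff_neg_of_one_le hα0 hα1 hy1, neg_lt_zero]
    exact mul_pos (by linarith) Real.pi_pos

theorem cpowDiff_mem_slitPlane (hα0 : 0 < α) (hα1 : α < 1) {z : ℂ} (hz : 0 ≤ z.im) :
    cpowDiff α z ∈ slitPlane := by
  rcases hz.lt_or_eq with hz | hz
  · exact Or.inr (im_cpowDiff_neg_of_im_pos hα0 hα1 hz).ne
  · obtain ⟨x, rfl⟩ : ∃ x : ℝ, (x : ℂ) = z := ⟨z.re, Complex.ext rfl hz⟩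
    rcases le_or_gt 0 x with hx | hx
    · rw [cpowDiff_ofReal hx]
      exact ofReal_mem_slitPlane.2 (sub_pos.2 (rpow_lt_one_add_rpow hα0 hx))
    · have him := im_cpowDiff_neg_of_neg hα0 hα1 (neg_pos.2 hx)
      rw [ofReal_neg, neg_neg] at him
      exact Or.inr him.ne

theorem continuousOn_bfryLaplace (hα0 : 0 < α) (hα1 : α < 1) (θ : ℝ) :
    ContinuousOn (bfryLaplace α θ) {z | 0 ≤ z.im} :=
  (continuousOn_cpowDiff hα0).cpow_const fun _ hz => cpowDiff_mem_slitPlane hα0 hα1 hz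

theorem differentiableAt_bfryLaplace (hα0 : 0 < α) (hα1 : α < 1) (θ : ℝ) {z : ℂ}
    (hz : z ∈ slitPlane) (hz0 : 0 ≤ z.im) : DifferentiableAt ℂ (bfryLaplace α θ) z :=
  (differentiableAt_cpowDiff hz).cpow_const (cpowDiff_mem_slitPlane hα0 hα1 hz0)

theorem tendsto_bfryLaplace_cobounded (hα0 : 0 ≤ α) (hα1 : α < 1) {θ : ℝ} (hθ : 0 < θ) :
    Tendsto (bfryLaplace α θ) (cobounded ℂ ⊓ 𝓟 {z | 0 < z.im}) (𝓝 0) := by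
  rw [tendsto_zero_iff_norm_tendsto_zero]
  simpa only [bfryLaplace, norm_cpow_real, norm_zero, Real.zero_rpow hθ.ne'] using
    (tendsto_cpowDiff_cobounded hα0 hα1).norm.rpow_const (Or.inr hθ.le)

theorem bfryLaplace_ofReal (hα0 : 0 < α) (θ : ℝ) {x : ℝ} (hx : 0 ≤ x) :
    bfryLaplace α θ x = (((1 + x) ^ α - x ^ α) ^ θ : ℝ) := by
  rw [bfryLaplace, cpowDiff_ofReal hx,
    ofReal_cpow (sub_pos.2 (rpow_lt_one_add_rpow hα0 hx)).le]

theorem bfryDensity_nonneg (hα0 : 0 < α) (hα1 : α < 1) {y : ℝ} (hy0 : 0 ≤ y) (hy1 : y ≤ 1) :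
    0 ≤ bfryDensity α y := by
  have hsin := sin_pi_mul_pos hα0 hα1
  have : 0 < 1 - α := sub_pos.2 hα1
  have : 0 ≤ 1 - y := sub_nonneg.2 hy1
  rw [bfryDensity, ← normSq_cpowDiff_neg_of_le_one hy0 hy1]
  have := normSq_nonneg (cpowDiff α (-y))
  positivity

theorem hasDerivAt_arg_cpowDiff_neg (hα0 : 0 < α) (hα1 : α < 1) {y : ℝ} (hy0 : 0 < y)
    (hy1 : y < 1) :
    HasDerivAt (fun y : ℝ => (cpowDiff α (-y)).arg) (-((1 - α) * Real.pi * bfryDensity α y)) y := by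
  set e : ℂ := exp ((Real.pi * α : ℝ) * I) with he
  have hslit : cpowDiff α (-y) ∈ slitPlane := cpowDiff_mem_slitPlane hα0 hα1 (by simp)
  have hleft : HasDerivAt (fun y : ℝ => (1 - y) ^ α) (-(α * (1 - y) ^ (α - 1))) y := by
    simpa using ((hasDerivAt_id y).const_sub 1).rpow_const (p := α) (Or.inl (sub_pos.2 hy1).ne')
  have hright : HasDerivAt (fun y : ℝ => y ^ α) (α * y ^ (α - 1)) y :=
    Real.hasDerivAt_rpow_const (Or.inl hy0.ne')
  have hderiv : HasDerivAt (fun y : ℝ => cpowDiff α (-y))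
      ((-(α * (1 - y) ^ (α - 1)) : ℝ) - (α * y ^ (α - 1) : ℝ) * e) y := by
    refine (hleft.ofReal_comp.sub (hright.ofReal_comp.mul_const e)).congr_of_eventuallyEq ?_
    filter_upwards [Ioo_mem_nhds hy0 hy1] with t ht
    exact cpowDiff_neg_of_le_one ht.1.le ht.2.le
  have harg := imCLM.hasFDerivAt.comp_hasDerivAt y (hderiv.clog_real hslit)
  simp only [Function.comp_def, imCLM_apply, log_im] at harg
  refine harg.congr_deriv ?_
  have hD := normSq_pos.2 (slitPlane_ne_zero hslit)
  have hleft_rpow : (1 - y) ^ α = (1 - y) * (1 - y) ^ (α - 1) := by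
    rw [← Real.rpow_one_add' (sub_pos.2 hy1).le (by simpa using hα0.ne'), add_sub_cancel]
  have hright_rpow : y ^ α = y * y ^ (α - 1) := by
    rw [← Real.rpow_one_add' hy0.le (by simpa using hα0.ne'), add_sub_cancel]
  have h1α : 1 - α ≠ 0 := (sub_pos.2 hα1).ne'
  rw [div_im, bfryDensity, ← normSq_cpowDiff_neg_of_le_one hy0.le hy1.le]
  set D := normSq (cpowDiff α (-y))
  simp only [cpowDiff_neg_of_le_one hy0.le hy1.le, sub_re, sub_im, ofReal_re, ofReal_im,
    re_ofReal_mul, im_ofReal_mul, he, exp_ofReal_mul_I_re, exp_ofReal_mul_I_im]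
  rw [hleft_rpow, hright_rpow]
  field_simp
  ring

theorem continuous_arg_cpowDiff_neg (hα0 : 0 < α) (hα1 : α < 1) :
    Continuous fun y : ℝ => (cpowDiff α (-y)).arg := by
  have hcont : Continuous fun y : ℝ => cpowDiff α (-y) :=
    (continuousOn_cpowDiff hα0).comp_continuous (by fun_prop) fun y => by simp
  refine continuous_iff_continuousAt.2 fun y => ?_
  exact (continuousAt_arg (cpowDiff_mem_slitPlane hα0 hα1 (by simp))).comp
    (f := fun y : ℝ => cpowDiff α (-y)) hcont.continuousAt

theorem arg_cpowDiff_neg_zero (hα0 : 0 < α) : (cpowDiff α (-(0 : ℝ))).arg = 0 := by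
  rw [ofReal_zero, neg_zero, ← ofReal_zero, cpowDiff_ofReal le_rfl,
    arg_ofReal_of_nonneg (sub_pos.2 (rpow_lt_one_add_rpow hα0 le_rfl)).le]

theorem antitoneOn_arg_cpowDiff_neg (hα0 : 0 < α) (hα1 : α < 1) :
    AntitoneOn (fun y : ℝ => (cpowDiff α (-y)).arg) (Icc 0 1) := by
  refine antitoneOn_of_hasDerivWithinAt_nonpos (convex_Icc 0 1)
    (f' := fun y => -((1 - α) * Real.pi * bfryDensity α y))
    (continuous_arg_cpowDiff_neg hα0 hα1).continuousOn (fun y hy => ?_) fun y hy => ?_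
  · rw [interior_Icc] at hy
    exact (hasDerivAt_arg_cpowDiff_neg hα0 hα1 hy.1 hy.2).hasDerivWithinAt
  · rw [interior_Icc] at hy
    exact neg_nonpos.2 (mul_nonneg (mul_pos (sub_pos.2 hα1) Real.pi_pos).le
      (bfryDensity_nonneg hα0 hα1 hy.1.le hy.2.le))

theorem arg_cpowDiff_neg_of_le_one (hα0 : 0 < α) (hα1 : α < 1) {y : ℝ} (hy0 : 0 ≤ y)
    (hy1 : y ≤ 1) : (cpowDiff α (-y)).arg = -((1 - α) * Real.pi * bfryCDF α y) := by
  have hpi : 0 < (1 - α) * Real.pi := mul_pos (sub_pos.2 hα1) Real.pi_pos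
  have hcont : ContinuousOn (fun y : ℝ => -(cpowDiff α (-y)).arg) (Icc 0 y) :=
    (continuous_arg_cpowDiff_neg hα0 hα1).neg.continuousOn
  have hderiv : ∀ t ∈ Ioo 0 y, HasDerivAt (fun y : ℝ => -(cpowDiff α (-y)).arg)
      ((1 - α) * Real.pi * bfryDensity α t) t := fun t ht => by
    simpa using (hasDerivAt_arg_cpowDiff_neg hα0 hα1 ht.1 (ht.2.trans_le hy1)).fun_neg
  have hint := intervalIntegral.integrableOn_deriv_of_nonneg hcont hderiv fun t ht =>
    mul_nonneg hpi.le (bfryDensity_nonneg hα0 hα1 ht.1.le (ht.2.le.trans hy1))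
  rw [bfryCDF, ← intervalIntegral.integral_const_mul,
    intervalIntegral.integral_eq_sub_of_hasDerivAt_of_le hy0 hcont hderiv
      ((intervalIntegrable_iff_integrableOn_Ioc_of_le hy0).2 hint), arg_cpowDiff_neg_zero hα0]
  ring

theorem arg_cpowDiff_neg_mem_Icc (hα0 : 0 < α) (hα1 : α < 1) {y : ℝ} (hy : 0 ≤ y) :
    (cpowDiff α (-y)).arg ∈ Icc (-((1 - α) * Real.pi)) 0 := by
  rcases le_total y 1 with hy1 | hy1
  · have hanti := antitoneOn_arg_cpowDiff_neg hα0 hα1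
    rw [← arg_cpowDiff_neg_of_one_le hα0 hα1 le_rfl, ← arg_cpowDiff_neg_zero hα0]
    exact ⟨hanti ⟨hy, hy1⟩ (right_mem_Icc.2 zero_le_one) hy1,
      hanti (left_mem_Icc.2 zero_le_one) ⟨hy, hy1⟩ hy⟩
  · rw [arg_cpowDiff_neg_of_one_le hα0 hα1 hy1, left_mem_Icc, neg_nonpos]
    exact mul_nonneg (sub_pos.2 hα1).le Real.pi_pos.le

theorem im_bfryLaplace_neg_nonpos (hα0 : 0 < α) (hα1 : α < 1) {θ : ℝ} (hθ0 : 0 ≤ θ)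
    (hθ1 : (1 - α) * θ ≤ 1) {y : ℝ} (hy : 0 ≤ y) : (bfryLaplace α θ (-y)).im ≤ 0 := by
  obtain ⟨hlo, hhi⟩ := arg_cpowDiff_neg_mem_Icc hα0 hα1 hy
  rw [bfryLaplace, cpow_ofReal_im]
  refine mul_nonpos_of_nonneg_of_nonpos (by positivity)
    (Real.sin_nonpos_of_nonpos_of_neg_pi_le (mul_nonpos_of_nonpos_of_nonneg hhi hθ0) ?_)
  nlinarith [Real.pi_pos]

theorem bfryMeanDensity_eq_of_le_one {σ w : ℝ} (hα0 : 0 < α) (hα1 : α < 1) (hw0 : 0 < w)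
    (hw1 : w ≤ 1) : bfryMeanDensity α σ w =
      -(bfryLaplace α (σ / (1 - α)) (-(w⁻¹ : ℝ))).im / w / Real.pi := by
  have h1α : 1 - α ≠ 0 := (sub_pos.2 hα1).ne'
  have hw : 1 ≤ w⁻¹ := (one_le_inv₀ hw0).2 hw1
  have hnorm : ‖cpowDiff α (-(w⁻¹ : ℝ))‖ = w ^ (-α) * (1 - (1 - w) ^ α) := by
    rw [norm_cpowDiff_neg_of_one_le hα0 hw, show w⁻¹ - 1 = w⁻¹ * (1 - w) by field_simp,
      Real.mul_rpow (by positivity) (by linarith), Real.inv_rpow hw0.le, Real.rpow_neg hw0.le]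
    ring
  have hnonneg : 0 ≤ 1 - (1 - w) ^ α :=
    sub_nonneg.2 (Real.rpow_le_one (by linarith) (by linarith) hα0.le)
  have hangle : -((1 - α) * Real.pi) * (σ / (1 - α)) = -(Real.pi * σ) := by field_simp
  rw [bfryMeanDensity, if_pos hw1, bfryLaplace, cpow_ofReal_im,
    arg_cpowDiff_neg_of_one_le hα0 hα1 hw, hnorm, Real.mul_rpow (by positivity) hnonneg,
    ← Real.rpow_mul hw0.le, Real.rpow_sub_one hw0.ne', hangle, Real.sin_neg,
    show -α * (σ / (1 - α)) = -(σ * α / (1 - α)) by ring]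
  ring

theorem bfryMeanDensity_eq_of_one_lt {σ w : ℝ} (hα0 : 0 < α) (hα1 : α < 1) (hw1 : 1 < w) :
    bfryMeanDensity α σ w =
      -(bfryLaplace α (σ / (1 - α)) (-(w⁻¹ : ℝ))).im / w / Real.pi := by
  have h1α : 1 - α ≠ 0 := (sub_pos.2 hα1).ne'
  have hw0 : 0 < w := zero_lt_one.trans hw1
  have hinv0 : 0 ≤ w⁻¹ := by positivity
  have hinv1 : w⁻¹ ≤ 1 := inv_le_one_of_one_le₀ hw1.le
  have hangle : -((1 - α) * Real.pi * bfryCDF α w⁻¹) * (σ / (1 - α)) =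
      -(Real.pi * σ * bfryCDF α w⁻¹) := by field_simp
  have hnormSq : (w - 1) ^ (2 * α) - 2 * (w - 1) ^ α * Real.cos (Real.pi * α) + 1 =
      (w ^ α * ‖cpowDiff α (-(w⁻¹ : ℝ))‖) ^ 2 := by
    rw [mul_pow, ← normSq_eq_norm_sq, normSq_cpowDiff_neg_of_le_one hinv0 hinv1,
      show 1 - w⁻¹ = w⁻¹ * (w - 1) by field_simp]
    simp only [rpow_two_mul, hw0.le, hinv0, sub_nonneg.2 hw1.le, mul_nonneg, Real.mul_rpow,
      Real.inv_rpow hw0.le]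
    field_simp
    ring
  rw [bfryMeanDensity, if_neg hw1.not_ge, bfryLaplace, cpow_ofReal_im, one_div,
    arg_cpowDiff_neg_of_le_one hα0 hα1 hinv0 hinv1, hnormSq, ← Real.rpow_two,
    ← Real.rpow_mul (by positivity), Real.mul_rpow (by positivity) (norm_nonneg _),
    show 2 * (σ / (2 * (1 - α))) = σ / (1 - α) by field_simp, ← Real.rpow_mul hw0.le,
    Real.rpow_sub_one hw0.ne', Real.rpow_neg hw0.le, hangle, Real.sin_neg,
    show α * (σ / (1 - α)) = σ * α / (1 - α) by ring]
  field_simp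

theorem bfryMeanDensity_eq {σ w : ℝ} (hα0 : 0 < α) (hα1 : α < 1) (hw : 0 < w) :
    bfryMeanDensity α σ w =
      -(bfryLaplace α (σ / (1 - α)) (-(w⁻¹ : ℝ))).im / w / Real.pi := by
  rcases le_or_gt w 1 with hw1 | hw1
  · exact bfryMeanDensity_eq_of_le_one hα0 hα1 hw hw1
  · exact bfryMeanDensity_eq_of_one_lt hα0 hα1 hw1

theorem bfryMeanDensity_nonneg {σ w : ℝ} (hα0 : 0 < α) (hα1 : α < 1) (hσ0 : 0 ≤ σ) (hσ1 : σ ≤ 1)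
    (hw : 0 < w) : 0 ≤ bfryMeanDensity α σ w := by
  have h1α : 0 < 1 - α := sub_pos.2 hα1
  rw [bfryMeanDensity_eq hα0 hα1 hw]
  have him := im_bfryLaplace_neg_nonpos hα0 hα1 (div_nonneg hσ0 h1α.le)
    ((mul_div_cancel₀ σ h1α.ne').trans_le hσ1) (inv_pos.2 hw).le
  exact div_nonneg (div_nonneg (neg_nonneg.2 him) hw.le) Real.pi_pos.le

theorem integrableOn_and_integral_neg_im_bfryLaplace_div_add (hα0 : 0 < α) (hα1 : α < 1) {θ : ℝ}
    (hθ0 : 0 < θ) (hθ1 : (1 - α) * θ ≤ 1) {x : ℝ} (hx : 0 ≤ x) :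
    IntegrableOn (fun y : ℝ => -(bfryLaplace α θ (-y)).im / (y + x)) (Ioi 0) ∧
      ∫ y in Ioi (0 : ℝ), -(bfryLaplace α θ (-y)).im / (y + x) =
        Real.pi * ((1 + x) ^ α - x ^ α) ^ θ := by
  rw [← ofReal_re (((1 + x) ^ α - x ^ α) ^ θ), ← bfryLaplace_ofReal hα0 θ hx]
  refine integrableOn_and_integral_neg_im_div_add_of_nonneg (continuousOn_bfryLaplace hα0 hα1 θ)
    (fun z hz => ?_) (tendsto_bfryLaplace_cobounded hα0.le hα1 hθ0) (fun t ht => ?_)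
    (fun t ht => ?_) (fun y hy => im_bfryLaplace_neg_nonpos hα0 hα1 hθ0.le hθ1 hy) hx
  · exact (differentiableAt_bfryLaplace hα0 hα1 θ (Or.inr (ne_of_gt hz))
      (le_of_lt hz)).differentiableWithinAt
  · exact differentiableAt_bfryLaplace hα0 hα1 θ (ofReal_mem_slitPlane.2 ht) (ofReal_im t).ge
  · rw [bfryLaplace_ofReal hα0 θ ht, ofReal_im]

theorem integrableOn_and_integral_bfryMeanDensity_div {σ : ℝ} (hα0 : 0 < α) (hα1 : α < 1)
    (hσ0 : 0 < σ) (hσ1 : σ ≤ 1) {s : ℝ} (hs : 0 ≤ s) :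
    IntegrableOn (fun w => bfryMeanDensity α σ w / (1 + s * w)) (Ioi 0) ∧
      ∫ w in Ioi (0 : ℝ), bfryMeanDensity α σ w / (1 + s * w) =
        ((1 + s) ^ α - s ^ α) ^ (σ / (1 - α)) := by
  have h1α : 0 < 1 - α := sub_pos.2 hα1
  set h : ℝ → ℝ := fun y => -(bfryLaplace α (σ / (1 - α)) (-y)).im
  obtain ⟨hint, heq⟩ := integrableOn_and_integral_neg_im_bfryLaplace_div_add hα0 hα1
    (div_pos hσ0 h1α) ((mul_div_cancel₀ σ h1α.ne').trans_le hσ1) hs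
  have hmean : ∀ w ∈ Ioi (0 : ℝ),
      h w⁻¹ / w / (1 + s * w) / Real.pi = bfryMeanDensity α σ w / (1 + s * w) := fun w hw => by
    rw [bfryMeanDensity_eq hα0 hα1 hw, div_right_comm]
  obtain ⟨hinv_int, hinv_eq⟩ := integrableOn_and_integral_comp_inv_div (h := h) (x := s)
  constructor
  · exact IntegrableOn.congr_fun ((hinv_int.2 hint).div_const Real.pi) hmean measurableSet_Ioi
  · rw [← setIntegral_congr_fun measurableSet_Ioi hmean, integral_div, hinv_eq, heq,
      mul_div_cancel_left₀ _ Real.pi_ne_zero]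

end BFRY

/-- Theorem 5.1: `g_{α,σ}` is a probability density on `(0,∞)` and
for every `λ ≥ 0`, `∫₀^∞ e^{−λx} g_{α,σ}(x) dx = ((1+λ)^α − λ^α)^{σ/(1−α)}`. -/
theorem bfry_increment_density
    (α σ : ℝ) (hα0 : 0 < α) (hα1 : α < 1) (hσ0 : 0 < σ) (hσ1 : σ ≤ 1) :
    (∀ x ∈ Set.Ioi (0:ℝ), 0 ≤ bfryIncrementDensity α σ x) ∧
    (∫ x in Set.Ioi (0:ℝ), bfryIncrementDensity α σ x = 1) ∧
    (∀ l : ℝ, 0 ≤ l →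
      ∫ x in Set.Ioi (0:ℝ), Real.exp (-l * x) * bfryIncrementDensity α σ x
        = ((1 + l) ^ α - l ^ α) ^ (σ / (1 - α))) := by
  have hlaplace : ∀ l : ℝ, 0 ≤ l →
      ∫ x in Set.Ioi (0:ℝ), Real.exp (-l * x) * bfryIncrementDensity α σ x
        = ((1 + l) ^ α - l ^ α) ^ (σ / (1 - α)) := fun l hl => by
    obtain ⟨hint, heq⟩ := integrableOn_and_integral_bfryMeanDensity_div hα0 hα1 hσ0 hσ1 hl
    exact (integral_exp_mul_integral_exp_div hl hint).trans heq
  refine ⟨fun x _ => setIntegral_nonneg measurableSet_Ioi fun w hw => ?_, ?_, hlaplace⟩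
  · exact mul_nonneg (mul_nonneg (Real.exp_nonneg _) (inv_pos.2 hw).le)
      (bfryMeanDensity_nonneg hα0 hα1 hσ0.le hσ1 hw)
  · simpa [Real.zero_rpow hα0.ne'] using hlaplace 0 le_rfl
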